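/- Let λ be a real number with 0 < λ ≤ 8/13. If f is a close-to-convex function on the unit disk with Taylor coefficients a_k, then |λ a_4² − a_7| ≤ 7. -/

import Mathlib

open Complex Metric

/-- The k-th Taylor coefficient of `f` at `0`: `a_k = f^{(k)}(0)/k!`. -/
noncomputable def taylorCoeff (f : ℂ → ℂ) (k : ℕ) : ℂ :=
  iteratedDeriv k f 0 / (Nat.factorial k)

/-- `g` is a (normalized) starlike function on the unit disk. -/
def IsStarlikeFn (g : ℂ → ℂ) : Prop :=
  DifferentiableOn ℂ g (ball (0 : ℂ) 1) ∧ g 0 = 0 ∧ deriv g 0 = 1 ∧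
    ∀ z ∈ ball (0 : ℂ) 1 \ {0}, 0 < (z * deriv g z / g z).re

/-- `f` is a (normalized) close-to-convex function on the unit disk. -/
def IsCloseToConvex (f : ℂ → ℂ) : Prop :=
  DifferentiableOn ℂ f (ball (0 : ℂ) 1) ∧ f 0 = 0 ∧ deriv f 0 = 1 ∧
    ∃ θ : ℝ, ∃ g : ℂ → ℂ, IsStarlikeFn g ∧
      ∀ z ∈ ball (0 : ℂ) 1 \ {0},
        0 < (Complex.exp (θ * Complex.I) * z * deriv f z / g z).re

/-!
A starlike function is `g z = z * q z ^ 2`, and Jack's lemma gives `1 / 2 < re q`. Hence a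
close-to-convex `f` has `f' = q ^ 2 * p`, where `p` takes values in a rotated half-plane. By
Herglotz, `q` is an average of the kernels `(1 - c z)⁻¹` and `p` of the kernels
`(1 - x z) (1 - b z)⁻¹` with `c`, `x`, `b` unimodular. A product of three factors `(1 - c z)⁻¹` is
in turn an average of cubes `(1 - y z)⁻³` over the triangle spanned by the three ratios, so `f'`
lies in the closed convex hull of the functions `(1 - x z) (1 - y z)⁻³` with `‖x‖ = 1`, `‖y‖ ≤ 1`.

After a rotation by `ω`, the quadratic term enters as `λ (im (ω a)) ^ 2`, a maximum of its tangents
`2 λ t im (ω a) - λ t ^ 2`. Each tangent gives a linear functional, which is bounded on the hull by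
its values on the functions `(1 - x z) (1 - y z)⁻³`. For the pair `a_{n+1}`, `a_{2n+1}` this leaves
an inequality between quadratic forms valid for `λ (n ^ 2 + n + 1) ≤ 2 (n + 1)`; the value `8 / 13`
is the case `n = 3`.
-/

open MeasureTheory Filter Topology PowerSeries
open scoped Pointwise

/-- The functionals on formal power series which depend only on finitely many coefficients. -/
noncomputable def coeffFunctionals : Submodule ℂ (ℂ⟦X⟧ →ₗ[ℂ] ℂ) :=
  Submodule.span ℂ (Set.range fun n => coeff n)

/-- The closed convex hull of a set of power series for coefficientwise convergence, encoded as
the intersection of all half-spaces `{φ | re (Λ φ) ≤ M}` containing the set, where `Λ` depends only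
on finitely many coefficients. -/
def coeffHull (S : Set ℂ⟦X⟧) : Set ℂ⟦X⟧ :=
  {φ | ∀ Λ ∈ coeffFunctionals, ∀ M : ℝ, (∀ σ ∈ S, (Λ σ).re ≤ M) → (Λ φ).re ≤ M}

lemma coeff_mem_coeffFunctionals (n : ℕ) : coeff n ∈ coeffFunctionals :=
  Submodule.subset_span ⟨n, rfl⟩

lemma comp_mulLeft_mem_coeffFunctionals (ψ : ℂ⟦X⟧) {Λ : ℂ⟦X⟧ →ₗ[ℂ] ℂ}
    (hΛ : Λ ∈ coeffFunctionals) : Λ ∘ₗ LinearMap.mulLeft ℂ ψ ∈ coeffFunctionals := by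
  induction hΛ using Submodule.span_induction with
  | mem _ h =>
    obtain ⟨n, rfl⟩ := h
    have expand : coeff n ∘ₗ LinearMap.mulLeft ℂ ψ =
        ∑ p ∈ Finset.HasAntidiagonal.antidiagonal n, coeff p.1 ψ • coeff (R := ℂ) p.2 := by
      ext1 φ
      simp [coeff_mul]
    rw [expand]
    exact Submodule.sum_mem _ fun p _ => Submodule.smul_mem _ _ (coeff_mem_coeffFunctionals p.2)
  | zero => simp
  | add Λ₁ Λ₂ _ _ h₁ h₂ => simpa only [LinearMap.add_comp] using Submodule.add_mem _ h₁ h₂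
  | smul a Λ _ h => simpa only [LinearMap.smul_comp] using Submodule.smul_mem _ a h

lemma subset_coeffHull (S : Set ℂ⟦X⟧) : S ⊆ coeffHull S :=
  fun φ hφ _ _ _ h => h φ hφ

lemma coeffHull_subset_coeffHull {S T : Set ℂ⟦X⟧} (h : S ⊆ coeffHull T) :
    coeffHull S ⊆ coeffHull T :=
  fun _ hφ Λ hΛ M hM => hφ Λ hΛ M fun _ hσ => h hσ Λ hΛ M hM

lemma coeffHull_mono {S T : Set ℂ⟦X⟧} (h : S ⊆ T) : coeffHull S ⊆ coeffHull T :=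
  coeffHull_subset_coeffHull (h.trans (subset_coeffHull T))

lemma mul_mem_coeffHull_smul (ψ : ℂ⟦X⟧) {φ : ℂ⟦X⟧} {S : Set ℂ⟦X⟧} (hφ : φ ∈ coeffHull S) :
    ψ * φ ∈ coeffHull (ψ • S) :=
  fun _ hΛ M hM => hφ _ (comp_mulLeft_mem_coeffFunctionals ψ hΛ) M fun _ hσ =>
    hM _ (Set.smul_mem_smul_set hσ)

lemma mul_mem_coeffHull {φ ψ : ℂ⟦X⟧} {S T : Set ℂ⟦X⟧} (hφ : φ ∈ coeffHull S)
    (hψ : ψ ∈ coeffHull T) : φ * ψ ∈ coeffHull (S * T) := by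
  refine coeffHull_subset_coeffHull ?_ (mul_mem_coeffHull_smul φ hψ)
  rintro _ ⟨τ, hτ, rfl⟩
  change φ * τ ∈ coeffHull (S * T)
  rw [mul_comm φ τ]
  refine coeffHull_mono ?_ (mul_mem_coeffHull_smul τ hφ)
  rintro _ ⟨σ, hσ, rfl⟩
  exact ⟨σ, hσ, τ, hτ, mul_comm σ τ⟩

lemma add_mem_coeffHull_vadd (ψ : ℂ⟦X⟧) {φ : ℂ⟦X⟧} {S : Set ℂ⟦X⟧} (hφ : φ ∈ coeffHull S) :
    ψ + φ ∈ coeffHull (ψ +ᵥ S) := by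
  intro Λ hΛ M hM
  have h := hφ Λ hΛ (M - (Λ ψ).re) fun σ hσ => by
    have := hM _ (Set.vadd_mem_vadd_set hσ)
    rw [vadd_eq_add, map_add, add_re] at this
    linarith
  rw [map_add, add_re]
  linarith

lemma mem_coeffHull_of_tendsto {ι : Type*} {l : Filter ι} [l.NeBot] {S : Set ℂ⟦X⟧}
    {F : ι → ℂ⟦X⟧} {φ : ℂ⟦X⟧} (hF : ∀ᶠ i in l, F i ∈ coeffHull S)
    (hlim : ∀ n, Tendsto (fun i => coeff n (F i)) l (𝓝 (coeff n φ))) : φ ∈ coeffHull S := by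
  intro Λ hΛ M hM
  have hΛlim : Tendsto (fun i => Λ (F i)) l (𝓝 (Λ φ)) := by
    clear hM
    induction hΛ using Submodule.span_induction with
    | mem _ h => obtain ⟨n, rfl⟩ := h; exact hlim n
    | zero => simp
    | add Λ₁ Λ₂ _ _ h₁ h₂ => exact h₁.add h₂
    | smul a Λ _ h => exact h.const_mul a
  exact le_of_tendsto ((continuous_re.tendsto _).comp hΛlim) (hF.mono fun i hi => hi Λ hΛ M hM)

lemma mem_coeffHull_of_integral {α : Type*} {mα : MeasurableSpace α} {μ : Measure α}
    {S : Set ℂ⟦X⟧} {w : α → ℝ} {F : α → ℂ⟦X⟧} {φ : ℂ⟦X⟧} (hw : ∀ᵐ a ∂μ, 0 ≤ w a)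
    (hw_int : Integrable w μ) (hw_one : ∫ a, w a ∂μ = 1) (hF : ∀ᵐ a ∂μ, F a ∈ S)
    (hF_int : ∀ n, Integrable (fun a => w a * coeff n (F a)) μ)
    (hφ : ∀ n, ∫ a, w a * coeff n (F a) ∂μ = coeff n φ) : φ ∈ coeffHull S := by
  intro Λ hΛ M hM
  obtain ⟨hint, heq⟩ : Integrable (fun a => w a * Λ (F a)) μ ∧ ∫ a, w a * Λ (F a) ∂μ = Λ φ := by
    clear hM
    induction hΛ using Submodule.span_induction with
    | mem _ h => obtain ⟨n, rfl⟩ := h; exact ⟨hF_int n, hφ n⟩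
    | zero => simp
    | add Λ₁ Λ₂ _ _ h₁ h₂ =>
      simp only [LinearMap.add_apply, mul_add]
      exact ⟨h₁.1.add h₂.1, by rw [integral_add h₁.1 h₂.1, h₁.2, h₂.2]⟩
    | smul c Λ _ h =>
      simp only [LinearMap.smul_apply, smul_eq_mul, mul_left_comm _ c]
      exact ⟨h.1.const_mul c, by rw [integral_const_mul, h.2]⟩
  calc (Λ φ).re = ∫ a, (w a * Λ (F a)).re ∂μ := by rw [← heq]; exact (integral_re hint).symm
    _ ≤ ∫ a, w a * M ∂μ := by
        refine integral_mono_ae hint.re (hw_int.mul_const M) ?_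
        filter_upwards [hw, hF] with a ha hFa
        simpa only [re_ofReal_mul] using mul_le_mul_of_nonneg_left (hM _ hFa) ha
    _ = M := by rw [integral_mul_const, hw_one, one_mul]

/-! ### Powers of the geometric series -/

/-- The geometric series `∑ yⁿ Xⁿ = (1 - y X)⁻¹`. -/
noncomputable def geomSeries (y : ℂ) : ℂ⟦X⟧ :=
  rescale y (mk 1)

/-- The `m`-th powers of the geometric series with ratio in the closed unit disk. -/
noncomputable def geomSeriesPowers (m : ℕ) : Set ℂ⟦X⟧ :=
  (fun y => geomSeries y ^ m) '' closedBall 0 1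

lemma coeff_geomSeries (n : ℕ) (y : ℂ) : coeff n (geomSeries y) = y ^ n := by
  simp [geomSeries, coeff_rescale]

lemma geomSeries_mul_one_sub (y : ℂ) : geomSeries y * (1 - C y * X) = 1 := by
  have h := congrArg (rescale y) (mk_one_mul_one_sub_eq_one ℂ)
  simpa [geomSeries, rescale_X] using h

lemma coeff_geomSeries_pow (m n : ℕ) (y : ℂ) :
    coeff n (geomSeries y ^ (m + 1)) = ((m + n).choose m : ℂ) * y ^ n := by
  rw [geomSeries, ← map_pow, mk_one_pow_eq_mk_choose_add, coeff_rescale, coeff_mk, mul_comm]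

/-- The curve `φ` of power series has derivative `φ'` at `s`, coefficient by coefficient. -/
def HasCoeffDerivAt (φ : ℝ → ℂ⟦X⟧) (φ' : ℂ⟦X⟧) (s : ℝ) : Prop :=
  ∀ n, HasDerivAt (fun t => coeff n (φ t)) (coeff n φ') s

lemma HasCoeffDerivAt.mul {φ ψ : ℝ → ℂ⟦X⟧} {φ' ψ' : ℂ⟦X⟧} {s : ℝ}
    (hφ : HasCoeffDerivAt φ φ' s) (hψ : HasCoeffDerivAt ψ ψ' s) :
    HasCoeffDerivAt (fun t => φ t * ψ t) (φ' * ψ s + φ s * ψ') s := by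
  intro n
  simp only [coeff_mul, map_add, ← Finset.sum_add_distrib]
  exact HasDerivAt.fun_sum fun p _ => (hφ p.1).mul (hψ p.2)

lemma hasCoeffDerivAt_const (φ : ℂ⟦X⟧) (s : ℝ) : HasCoeffDerivAt (fun _ => φ) 0 s :=
  fun _ => by simpa using hasDerivAt_const s _

lemma HasCoeffDerivAt.pow {φ : ℝ → ℂ⟦X⟧} {φ' : ℂ⟦X⟧} {s : ℝ} (hφ : HasCoeffDerivAt φ φ' s)
    (m : ℕ) : HasCoeffDerivAt (fun t => φ t ^ (m + 1)) ((m + 1 : ℕ) * φ s ^ m * φ') s := by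
  induction m with
  | zero => simpa using hφ
  | succ m ih =>
    simp only [pow_succ _ (m + 1)]
    convert ih.mul hφ using 1
    push_cast
    ring

lemma HasCoeffDerivAt.C {u : ℝ → ℂ} {u' : ℂ} {s : ℝ} (hu : HasDerivAt u u' s) :
    HasCoeffDerivAt (fun t => PowerSeries.C (u t)) (PowerSeries.C u') s := by
  intro n
  simp only [coeff_C]
  split_ifs
  · exact hu
  · exact hasDerivAt_const s 0

lemma HasCoeffDerivAt.geomSeries {u : ℝ → ℂ} {u' : ℂ} {s : ℝ} (hu : HasDerivAt u u' s) :
    HasCoeffDerivAt (fun t => geomSeries (u t)) (geomSeries (u s) ^ 2 * (PowerSeries.C u' * X))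
      s := by
  intro n
  cases n with
  | zero => simpa [coeff_geomSeries, ← mul_assoc] using hasDerivAt_const s (1 : ℂ)
  | succ n =>
    rw [← mul_assoc, coeff_succ_mul_X, coeff_mul_C, coeff_geomSeries_pow]
    simp only [coeff_geomSeries]
    simpa [add_comm] using hu.fun_pow (n + 1)

/-- Integrating over `0 ≤ s ≤ 1` writes `geomSeries y ^ (m + 1) * geomSeries d` as an average of
`geomSeries u ^ (m + 2)` over the segment from `d` to `y` (a Hermite–Genocchi formula). -/
lemma hasCoeffDerivAt_segment (m : ℕ) (y d : ℂ) (s : ℝ) :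
    HasCoeffDerivAt
      (fun t => PowerSeries.C ((t : ℂ) ^ (m + 1)) * (geomSeries (d + t * (y - d)) ^ (m + 1) *
        geomSeries d))
      (PowerSeries.C ((m + 1 : ℕ) * (s : ℂ) ^ m) * geomSeries (d + s * (y - d)) ^ (m + 2)) s := by
  have hpow : HasDerivAt (fun t : ℝ => (t : ℂ) ^ (m + 1)) ((m + 1 : ℕ) * (s : ℂ) ^ m) s := by
    simpa using (hasDerivAt_pow (m + 1) (s : ℂ)).comp_ofReal
  have hseg : HasDerivAt (fun t : ℝ => d + (t : ℂ) * (y - d)) (y - d) s := by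
    simpa using (((hasDerivAt_id (s : ℂ)).mul_const (y - d)).const_add d).comp_ofReal
  have hderiv := (HasCoeffDerivAt.C hpow).mul
    (((HasCoeffDerivAt.geomSeries hseg).pow m).mul (hasCoeffDerivAt_const (geomSeries d) s))
  convert hderiv using 1
  have hu := geomSeries_mul_one_sub (d + s * (y - d))
  have hd := geomSeries_mul_one_sub d
  simp only [map_add, map_mul, map_sub, map_pow, map_natCast] at hu hd ⊢
  push_cast
  linear_combination ((m + 1 : ℂ⟦X⟧) * PowerSeries.C (s : ℂ) ^ m *
    geomSeries (d + s * (y - d)) ^ (m + 1)) *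
      (geomSeries d * hu - geomSeries (d + s * (y - d)) * hd)

lemma geomSeries_pow_mul_geomSeries_mem_coeffHull (m : ℕ) {y d : ℂ}
    (hy : y ∈ closedBall (0 : ℂ) 1) (hd : d ∈ closedBall (0 : ℂ) 1) :
    geomSeries y ^ (m + 1) * geomSeries d ∈ coeffHull (geomSeriesPowers (m + 2)) := by
  have hcont (n : ℕ) : Continuous fun s : ℝ => (((m + 1 : ℕ) * s ^ m : ℝ) : ℂ) *
      coeff n (geomSeries (d + s * (y - d)) ^ (m + 2)) := by
    simp only [coeff_geomSeries_pow]
    fun_prop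
  refine mem_coeffHull_of_integral (μ := volume.restrict (Set.Ioc (0 : ℝ) 1))
    (w := fun s => (m + 1 : ℕ) * s ^ m) (F := fun s => geomSeries (d + s * (y - d)) ^ (m + 2))
    ?_ ?_ ?_ ?_ (fun n => ((hcont n).intervalIntegrable 0 1).1) fun n => ?_
  · filter_upwards [ae_restrict_mem measurableSet_Ioc] with s hs
    have := hs.1.le
    positivity
  · exact (Continuous.intervalIntegrable (by fun_prop) 0 1).1
  · rw [← intervalIntegral.integral_of_le zero_le_one, intervalIntegral.integral_const_mul,
      integral_pow]
    push_cast
    field_simp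
    simp
  · filter_upwards [ae_restrict_mem measurableSet_Ioc] with s hs
    refine ⟨d + s * (y - d), ?_, rfl⟩
    simpa using (convex_closedBall (0 : ℂ) 1).add_smul_sub_mem hd hy ⟨hs.1.le, hs.2⟩
  · have hderiv (s : ℝ) := hasCoeffDerivAt_segment m y d s n
    simp only [coeff_C_mul] at hderiv
    rw [← intervalIntegral.integral_of_le zero_le_one,
      intervalIntegral.integral_eq_sub_of_hasDerivAt (fun s _ => by simpa using hderiv s)
        ((hcont n).intervalIntegrable 0 1)]
    simp

/-! ### Herglotz representation -/

/-- The Taylor expansion of `f` at `0` as a formal power series. -/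
noncomputable def taylorSeries (f : ℂ → ℂ) : ℂ⟦X⟧ :=
  mk (taylorCoeff f)

@[simp]
lemma coeff_taylorSeries (f : ℂ → ℂ) (n : ℕ) : coeff n (taylorSeries f) = taylorCoeff f n :=
  coeff_mk n _

lemma taylorSeries_congr {u v : ℂ → ℂ} (h : u =ᶠ[𝓝 0] v) : taylorSeries u = taylorSeries v := by
  ext n
  simp only [coeff_taylorSeries, taylorCoeff, (h.iteratedDeriv n).eq_of_nhds]

lemma taylorSeries_mul {u v : ℂ → ℂ} (hu : AnalyticAt ℂ u 0) (hv : AnalyticAt ℂ v 0) :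
    taylorSeries (u * v) = taylorSeries u * taylorSeries v := by
  ext n
  simp only [coeff_mul, coeff_taylorSeries, taylorCoeff]
  rw [iteratedDeriv_mul hu.contDiffAt hv.contDiffAt, Finset.sum_div,
    Finset.Nat.sum_antidiagonal_eq_sum_range_succ_mk]
  refine Finset.sum_congr rfl fun i hi => ?_
  rw [Nat.cast_choose ℂ (Finset.mem_range_succ_iff.mp hi)]
  have := n.factorial_ne_zero
  field_simp

lemma taylorSeries_const_add_const_mul (a κ : ℂ) (h : ℂ → ℂ) :
    taylorSeries (fun z => a + κ * h z) = C a + C κ * taylorSeries h := by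
  ext n
  simp only [coeff_taylorSeries, map_add, coeff_C_mul, coeff_C, taylorCoeff]
  rcases n.eq_zero_or_pos with rfl | hn
  · simp
  · rw [iteratedDeriv_const_add hn, iteratedDeriv_const_mul_field, if_neg hn.ne', zero_add,
      mul_div_assoc]

lemma taylorCoeff_succ (f : ℂ → ℂ) (n : ℕ) :
    taylorCoeff f (n + 1) = taylorCoeff (deriv f) n / (n + 1) := by
  rw [taylorCoeff, taylorCoeff, iteratedDeriv_succ', Nat.factorial_succ]
  push_cast
  field_simp

lemma circleAverage_inv_pow_mul {h : ℂ → ℂ} {r : ℝ} (hr : 0 < r)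
    (hh : DifferentiableOn ℂ h (closedBall 0 r)) (k : ℕ) :
    Real.circleAverage (fun z => (z⁻¹) ^ k * h z) 0 r = taylorCoeff h k := by
  have cauchy := hh.circleIntegral_one_div_sub_center_pow_smul hr k
  have integrand : (fun z : ℂ => (z - 0)⁻¹ • ((z⁻¹) ^ k * h z))
      = fun z : ℂ => (1 / (z - 0) ^ (k + 1)) • h z := by
    funext z
    simp only [sub_zero, smul_eq_mul, one_div, pow_succ, mul_inv, inv_pow]
    ring
  rw [Real.circleAverage_eq_circleIntegral hr.ne', integrand, cauchy, taylorCoeff, smul_eq_mul,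
    smul_eq_mul]
  field_simp [two_pi_I_ne_zero]

lemma circleAverage_inv_pow_mul_conj_eq_zero {u : ℂ → ℂ} {r : ℝ} (hr : 0 < r)
    (hu : DifferentiableOn ℂ u (closedBall 0 r)) (hu0 : u 0 = 0) (k : ℕ) :
    Real.circleAverage (fun z => (r / z) ^ k * starRingEnd ℂ (u z)) 0 r = 0 := by
  have hdiff : DifferentiableOn ℂ (fun z => (z / r) ^ k * u z) (closedBall 0 r) := by fun_prop
  have hci : CircleIntegrable (fun z => (z / r) ^ k * u z) 0 r :=
    (hdiff.continuousOn.mono sphere_subset_closedBall).circleIntegrable hr.le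
  have hmean : Real.circleAverage (fun z => (z / r) ^ k * u z) 0 r = 0 := by
    have hcl : DiffContOnCl ℂ (fun z => (z / r) ^ k * u z) (ball 0 |r|) := by
      rw [abs_of_pos hr]
      exact (hdiff.mono closure_ball_subset_closedBall).diffContOnCl
    simp [hcl.circleAverage, hu0]
  have hconj := conjCLE.toContinuousLinearMap.circleAverage_comp_comm hci
  rw [hmean, map_zero] at hconj
  refine (Real.circleAverage_congr_sphere fun z hz => ?_).trans hconj
  have hz0 : z ≠ 0 := ne_of_mem_sphere hz (abs_pos.mpr hr.ne').ne'
  have hnorm : z * starRingEnd ℂ z = (r : ℂ) ^ 2 := by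
    rw [mul_conj', mem_sphere_zero_iff_norm.mp hz, abs_of_pos hr]
  have hrefl : (r : ℂ) / z = starRingEnd ℂ (z / r) := by
    have : (r : ℂ) ≠ 0 := ofReal_ne_zero.mpr hr.ne'
    rw [map_div₀, conj_ofReal]
    field_simp
    exact hnorm.symm
  simp [hrefl]

lemma circleAverage_two_mul_re_sub_one_mul {h : ℂ → ℂ} {r : ℝ} (hr : 0 < r)
    (hh : DifferentiableOn ℂ h (closedBall 0 r)) (hh0 : h 0 = 1) (k : ℕ) :
    Real.circleAverage (fun z => ((2 * (h z).re - 1 : ℝ) : ℂ) * (r / z) ^ k) 0 r =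
      r ^ k * taylorCoeff h k := by
  have hcont : ContinuousOn h (sphere 0 r) := hh.continuousOn.mono sphere_subset_closedBall
  have hinv : ContinuousOn (fun z : ℂ => z⁻¹) (sphere 0 r) :=
    continuousOn_id.inv₀ fun z hz => ne_of_mem_sphere hz hr.ne'
  have hci₁ : CircleIntegrable (fun z => (r : ℂ) ^ k • ((z⁻¹) ^ k * h z)) 0 r :=
    ContinuousOn.circleIntegrable hr.le (by fun_prop)
  have hci₂ : CircleIntegrable (fun z => (r / z) ^ k * starRingEnd ℂ (h z - 1)) 0 r := by
    refine ContinuousOn.circleIntegrable hr.le ?_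
    simp only [div_eq_mul_inv]
    exact ((continuousOn_const.mul hinv).pow k).mul
      (continuous_conj.comp_continuousOn (hcont.sub continuousOn_const))
  have split : (fun z => ((2 * (h z).re - 1 : ℝ) : ℂ) * (r / z) ^ k) =
      fun z => (r : ℂ) ^ k • ((z⁻¹) ^ k * h z) + (r / z) ^ k * starRingEnd ℂ (h z - 1) := by
    funext z
    have := add_conj (h z)
    push_cast at this ⊢
    rw [← this, map_sub, map_one, smul_eq_mul, div_eq_mul_inv, mul_pow]
    ring
  rw [split, Real.circleAverage_fun_add hci₁ hci₂, Real.circleAverage_fun_smul,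
    circleAverage_inv_pow_mul hr hh,
    circleAverage_inv_pow_mul_conj_eq_zero hr (hh.sub_const 1) (by simp [hh0]), add_zero,
    smul_eq_mul]

lemma mem_coeffHull_of_circleAverage {S : Set ℂ⟦X⟧} {w : ℂ → ℝ} {F : ℂ → ℂ⟦X⟧} {φ : ℂ⟦X⟧} {r : ℝ}
    (hr : 0 ≤ r) (hw : ∀ z ∈ sphere (0 : ℂ) r, 0 ≤ w z) (hw_int : CircleIntegrable w 0 r)
    (hw_one : Real.circleAverage w 0 r = 1) (hF : ∀ z ∈ sphere (0 : ℂ) r, F z ∈ S)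
    (hF_int : ∀ n, CircleIntegrable (fun z => w z * coeff n (F z)) 0 r)
    (hφ : ∀ n, Real.circleAverage (fun z => w z * coeff n (F z)) 0 r = coeff n φ) :
    φ ∈ coeffHull S := by
  refine mem_coeffHull_of_integral (μ := volume.restrict (Set.Ioc 0 (2 * Real.pi)))
    (w := fun θ => (2 * Real.pi)⁻¹ * w (circleMap 0 r θ)) (F := fun θ => F (circleMap 0 r θ))
    (.of_forall fun θ => ?_) ?_ ?_ (.of_forall fun θ => hF _ (circleMap_mem_sphere 0 hr θ))
    (fun n => ?_) fun n => ?_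
  · exact mul_nonneg (by positivity) (hw _ (circleMap_mem_sphere 0 hr θ))
  · exact (hw_int.const_mul _).1
  · rw [← hw_one, Real.circleAverage_def, intervalIntegral.integral_of_le Real.two_pi_pos.le,
      integral_const_mul, smul_eq_mul]
  · simpa only [ofReal_mul, mul_assoc, IntegrableOn] using ((hF_int n).const_mul _).1
  · rw [← hφ n, Real.circleAverage_def, intervalIntegral.integral_of_le Real.two_pi_pos.le,
      ← integral_smul]
    simp only [ofReal_mul, mul_assoc, real_smul]

lemma taylorSeries_mem_coeffHull_of_half_lt_re {h : ℂ → ℂ}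
    (hh : DifferentiableOn ℂ h (ball 0 1)) (hh0 : h 0 = 1)
    (hre : ∀ z ∈ ball (0 : ℂ) 1, 1 / 2 < (h z).re) :
    taylorSeries h ∈ coeffHull (geomSeries '' sphere 0 1) := by
  have hrescale : ∀ᶠ r : ℝ in 𝓝[<] 1,
      rescale (r : ℂ) (taylorSeries h) ∈ coeffHull (geomSeries '' sphere 0 1) := by
    filter_upwards [Ioo_mem_nhdsLT zero_lt_one] with r ⟨hr0, hr1⟩
    have hsub : closedBall (0 : ℂ) r ⊆ ball 0 1 := closedBall_subset_ball hr1
    have hsph := sphere_subset_closedBall.trans hsub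
    have havg := circleAverage_two_mul_re_sub_one_mul hr0 (hh.mono hsub) hh0
    have hcont : ContinuousOn (fun z => 2 * (h z).re - 1) (sphere (0 : ℂ) r) := by
      have := continuous_re.comp_continuousOn (hh.continuousOn.mono hsph)
      fun_prop
    have hinv : ContinuousOn (fun z : ℂ => z⁻¹) (sphere 0 r) :=
      continuousOn_id.inv₀ fun z hz => ne_of_mem_sphere hz hr0.ne'
    refine mem_coeffHull_of_circleAverage (w := fun z => 2 * (h z).re - 1)
      (F := fun z => geomSeries (r / z)) hr0.le (fun z hz => ?_)
      (hcont.circleIntegrable hr0.le) ?_ (fun z hz => ?_) (fun n => ?_) fun n => ?_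
    · linarith [hre z (hsph hz)]
    · have hcoe := ofRealCLM.circleAverage_comp_comm (hcont.circleIntegrable hr0.le)
      have hzero : taylorCoeff h 0 = 1 := by simp [taylorCoeff, hh0]
      exact ofReal_injective
        (hcoe.symm.trans (by simpa [hzero, Function.comp_def] using havg 0))
    · refine ⟨r / z, ?_, rfl⟩
      simp [mem_sphere_zero_iff_norm.mp hz, abs_of_pos hr0, hr0.ne']
    · simp only [coeff_geomSeries, div_eq_mul_inv]
      exact ((continuous_ofReal.comp_continuousOn hcont).mul
        ((continuousOn_const.mul hinv).pow n)).circleIntegrable hr0.le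
    · simpa only [coeff_geomSeries, coeff_rescale, coeff_taylorSeries] using havg n
  refine mem_coeffHull_of_tendsto hrescale fun n => ?_
  have hcont : Continuous fun r : ℝ => coeff n (rescale (r : ℂ) (taylorSeries h)) := by
    simp only [coeff_rescale]
    fun_prop
  simpa using (hcont.tendsto 1).mono_left nhdsWithin_le_nhds

/-! ### Starlike functions -/

/-- By the Schwarz lemma `W z / z` is at most `W z₀ / z₀` in modulus; the substitution
`z = z₀ * exp v` turns the disk into a half-plane with `z₀` at the boundary point `0`. -/
lemma isMaxOn_re_comp_exp_div {W : ℂ → ℂ} {z₀ : ℂ} (hW : DifferentiableOn ℂ W (ball 0 ‖z₀‖))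
    (hW0 : W 0 = 0) (hne : W z₀ ≠ 0)
    (hmax : IsMaxOn (fun z => ‖W z‖) (closedBall 0 ‖z₀‖) z₀) :
    IsMaxOn (fun v => (W (z₀ * exp v) * exp (-v) / W z₀).re) {v | v.re ≤ 0} 0 := by
  have hWz₀ : 0 < ‖W z₀‖ := norm_pos_iff.mpr hne
  have hz₀ : 0 < ‖z₀‖ := norm_pos_iff.mpr fun h => hne (by rw [h, hW0])
  intro v (hv : v.re ≤ 0)
  have hnorm : ‖z₀ * exp v‖ = ‖z₀‖ * Real.exp v.re := by rw [norm_mul, norm_exp]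
  have schwarz : ‖W (z₀ * exp v)‖ ≤ ‖W z₀‖ * Real.exp v.re := by
    rcases hv.lt_or_eq with hv | hv
    · have hmaps : Set.MapsTo W (ball 0 ‖z₀‖) (closedBall (W 0) ‖W z₀‖) := fun z hz => by
        simpa [hW0] using hmax (ball_subset_closedBall hz)
      have hmem : z₀ * exp v ∈ ball 0 ‖z₀‖ := by
        rw [mem_ball_zero_iff, hnorm]
        exact mul_lt_of_lt_one_right hz₀ (Real.exp_lt_one_iff.mpr hv)
      have := dist_le_div_mul_dist_of_mapsTo_ball hW hmaps hmem
      rw [hW0, dist_zero_right, dist_zero_right, hnorm] at this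
      refine this.trans_eq ?_
      field_simp
    · rw [hv, Real.exp_zero, mul_one]
      exact hmax (by rw [mem_closedBall_zero_iff, hnorm, hv, Real.exp_zero, mul_one])
  calc (W (z₀ * exp v) * exp (-v) / W z₀).re
      ≤ ‖W (z₀ * exp v)‖ * Real.exp (-v.re) / ‖W z₀‖ := by
        refine (re_le_norm _).trans_eq ?_
        rw [norm_div, norm_mul, norm_exp, neg_re]
    _ ≤ ‖W z₀‖ * Real.exp v.re * Real.exp (-v.re) / ‖W z₀‖ := by gcongr
    _ = 1 := by rw [mul_assoc, ← Real.exp_add, add_neg_cancel, Real.exp_zero, mul_one,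
                  div_self hWz₀.ne']
    _ = (W (z₀ * exp 0) * exp (-0) / W z₀).re := by simp [hne]

lemma eq_ofReal_nonneg_of_forall_re_mul_nonpos {c : ℂ} (h : ∀ v : ℂ, v.re ≤ 0 → (c * v).re ≤ 0) :
    c = (c.re : ℂ) ∧ 0 ≤ c.re := by
  have hI := h I (by simp)
  have hnegI := h (-I) (by simp)
  have hneg := h (-1) (by simp)
  simp only [mul_neg, neg_re, mul_I_re, mul_one] at hI hnegI hneg
  exact ⟨Complex.ext rfl (by rw [ofReal_im]; linarith), by linarith⟩

/-- **Jack's lemma**. -/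
lemma exists_one_le_mul_deriv_eq_mul {W : ℂ → ℂ} {z₀ : ℂ} (hW : DifferentiableOn ℂ W (ball 0 ‖z₀‖))
    (hWz₀ : DifferentiableAt ℂ W z₀) (hW0 : W 0 = 0) (hne : W z₀ ≠ 0)
    (hmax : IsMaxOn (fun z => ‖W z‖) (closedBall 0 ‖z₀‖) z₀) :
    ∃ k : ℝ, 1 ≤ k ∧ z₀ * deriv W z₀ = k * W z₀ := by
  set c := z₀ * deriv W z₀ / W z₀ - 1 with hc
  have hderiv : HasDerivAt (fun v => W (z₀ * exp v) * exp (-v) / W z₀) c 0 := by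
    have hexp : HasDerivAt (fun v => z₀ * exp v) z₀ 0 := by
      simpa using (hasDerivAt_exp 0).const_mul z₀
    have hcomp : HasDerivAt (fun v => W (z₀ * exp v)) (deriv W z₀ * z₀) 0 :=
      HasDerivAt.comp (0 : ℂ) (h₂ := W) (by simpa using hWz₀.hasDerivAt) hexp
    have hexp_neg : HasDerivAt (fun v : ℂ => exp (-v)) (-1) 0 := by
      simpa using (hasDerivAt_neg (0 : ℂ)).cexp
    refine ((hcomp.mul hexp_neg).div_const (W z₀)).congr_deriv ?_
    simp only [hc, neg_zero, exp_zero, mul_one, mul_neg]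
    field_simp
    ring
  have hnonpos (v : ℂ) (hv : v.re ≤ 0) : (c * v).re ≤ 0 := by
    have hseg : segment ℝ (0 : ℂ) (0 + v) ⊆ {v | v.re ≤ 0} :=
      (convex_halfSpace_re_le 0).segment_subset (by simp) (by simpa using hv)
    have := (isMaxOn_re_comp_exp_div hW hW0 hne hmax).localize.hasFDerivWithinAt_nonpos
      (reCLM.hasFDerivAt.comp (0 : ℂ)
        (hderiv.hasFDerivAt.restrictScalars ℝ)).hasFDerivWithinAt
      (mem_posTangentConeAt_of_segment_subset hseg)
    simpa [mul_comm] using this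
  obtain ⟨hreal, hpos⟩ := eq_ofReal_nonneg_of_forall_re_mul_nonpos hnonpos
  refine ⟨c.re + 1, by linarith, ?_⟩
  rw [ofReal_add, ← hreal, ofReal_one, hc]
  field_simp
  ring

lemma re_inv_one_sub_le_half {w : ℂ} (hw : 1 ≤ ‖w‖) : ((1 - w)⁻¹).re ≤ 1 / 2 := by
  have hsq : 1 ≤ normSq w := by rw [normSq_eq_norm_sq]; nlinarith
  rcases eq_or_ne w 1 with rfl | h1
  · simp
  have hpos : 0 < normSq (1 - w) := normSq_pos.mpr (sub_ne_zero.mpr h1.symm)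
  rw [inv_re, div_le_iff₀ hpos]
  rw [normSq_apply] at hsq ⊢
  simp only [sub_re, one_re, sub_im, one_im, zero_sub]
  nlinarith

lemma half_lt_re_of_norm_one_sub_inv_lt_one {q : ℂ} (hq : q ≠ 0) (h : ‖1 - q⁻¹‖ < 1) :
    1 / 2 < q.re := by
  have : ‖q - 1‖ < ‖q‖ := by
    have := mul_lt_of_lt_one_right (norm_pos_iff.mpr hq) h
    rwa [← norm_mul, mul_sub, mul_one, mul_inv_cancel₀ hq] at this
  have := pow_lt_pow_left₀ this (norm_nonneg _) two_ne_zero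
  rw [← normSq_eq_norm_sq, ← normSq_eq_norm_sq, normSq_apply, normSq_apply] at this
  simp only [sub_re, one_re, sub_im, one_im, sub_zero] at this
  nlinarith

lemma norm_lt_one_of_neg_half_lt_re {W : ℂ → ℂ} (hW : DifferentiableOn ℂ W (ball 0 1))
    (hW0 : W 0 = 0) (hne : ∀ z ∈ ball (0 : ℂ) 1, W z ≠ 1)
    (hre : ∀ z ∈ ball (0 : ℂ) 1, -(1 / 2) < (z * deriv W z / (1 - W z)).re) {z : ℂ}
    (hz : z ∈ ball (0 : ℂ) 1) : ‖W z‖ < 1 := by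
  by_contra! hWz
  have hsub : closedBall (0 : ℂ) ‖z‖ ⊆ ball 0 1 :=
    closedBall_subset_ball (mem_ball_zero_iff.mp hz)
  obtain ⟨z₀, hz₀, hmax⟩ := (isCompact_closedBall (0 : ℂ) ‖z‖).exists_isMaxOn ⟨z, by simp⟩
    (hW.continuousOn.mono hsub).norm
  have hsub₀ : closedBall (0 : ℂ) ‖z₀‖ ⊆ closedBall 0 ‖z‖ :=
    closedBall_subset_closedBall (mem_closedBall_zero_iff.mp hz₀)
  have hWz₀ : 1 ≤ ‖W z₀‖ := hWz.trans (hmax (by simp))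
  have hWz₀_ne : W z₀ ≠ 0 := norm_pos_iff.mp (by linarith)
  obtain ⟨k, hk, hderiv⟩ := exists_one_le_mul_deriv_eq_mul
    (hW.mono (ball_subset_closedBall.trans (hsub₀.trans hsub)))
    (hW.differentiableAt (isOpen_ball.mem_nhds (hsub hz₀))) hW0 hWz₀_ne (hmax.on_subset hsub₀)
  have hone_sub : 1 - W z₀ ≠ 0 := sub_ne_zero.mpr (hne z₀ (hsub hz₀)).symm
  have hquot : z₀ * deriv W z₀ / (1 - W z₀) = k * ((1 - W z₀)⁻¹ - 1) := by
    rw [hderiv]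
    field_simp
    ring
  have hre₀ := hre z₀ (hsub hz₀)
  rw [hquot, re_ofReal_mul, sub_re, one_re] at hre₀
  nlinarith [re_inv_one_sub_le_half hWz₀]

/-- The **Marx–Strohhäcker theorem**, with `q ^ 2 = g z / z` for a starlike function `g`. -/
lemma half_lt_re_of_neg_half_lt_re {q : ℂ → ℂ} (hq : DifferentiableOn ℂ q (ball 0 1))
    (hq0 : q 0 = 1) (hne : ∀ z ∈ ball (0 : ℂ) 1, q z ≠ 0)
    (hre : ∀ z ∈ ball (0 : ℂ) 1, -(1 / 2) < (z * deriv q z / q z).re) {z : ℂ}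
    (hz : z ∈ ball (0 : ℂ) 1) : 1 / 2 < (q z).re := by
  have hderiv (z : ℂ) (hz : z ∈ ball (0 : ℂ) 1) :
      HasDerivAt (fun z => 1 - (q z)⁻¹) (deriv q z / q z ^ 2) z := by
    have := (hq.differentiableAt (isOpen_ball.mem_nhds hz)).hasDerivAt
    simpa [neg_div] using (this.fun_inv (hne z hz)).const_sub 1
  refine half_lt_re_of_norm_one_sub_inv_lt_one (hne z hz) (norm_lt_one_of_neg_half_lt_re
    (W := fun z => 1 - (q z)⁻¹) (fun z hz => (hderiv z hz).differentiableAt.differentiableWithinAt)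
    (by simp [hq0]) (fun z hz => by simpa using hne z hz) (fun z hz => ?_) hz)
  convert hre z hz using 2
  have := hne z hz
  rw [(hderiv z hz).deriv]
  field_simp
  simp

lemma exists_differentiableOn_eqOn_exp {u : ℂ → ℂ} {c : ℂ} {r : ℝ}
    (hu : DifferentiableOn ℂ u (ball c r)) (hne : ∀ z ∈ ball c r, u z ≠ 0) :
    ∃ H : ℂ → ℂ, DifferentiableOn ℂ H (ball c r) ∧ H c = log (u c) ∧
      Set.EqOn u (fun z => exp (H z)) (ball c r) := by
  rcases le_or_gt r 0 with hr | hr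
  · exact ⟨fun _ => log (u c), by simp [ball_eq_empty.mpr hr], rfl, by simp [ball_eq_empty.mpr hr]⟩
  have hc : c ∈ ball c r := mem_ball_self hr
  obtain ⟨H, hHc, hH⟩ :=
    ((hu.deriv isOpen_ball).div hu hne).isExactOn_ball.with_val_at c (log (u c))
  have hderiv (z : ℂ) (hz : z ∈ ball c r) : HasDerivAt (fun z => u z * exp (-H z)) 0 z := by
    have hu' := (hu.differentiableAt (isOpen_ball.mem_nhds hz)).hasDerivAt
    refine (hu'.mul (hH z hz).neg.cexp).congr_deriv ?_
    have := hne z hz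
    simp only [Pi.div_apply, Pi.neg_apply]
    field_simp
    ring
  refine ⟨H, fun z hz => (hH z hz).differentiableAt.differentiableWithinAt, hHc, fun z hz => ?_⟩
  have hconst := isOpen_ball.is_const_of_deriv_eq_zero (convex_ball c r).isPreconnected
    (fun z hz => (hderiv z hz).differentiableAt.differentiableWithinAt)
    (fun z hz => (hderiv z hz).deriv) hz hc
  rw [hHc, exp_neg, exp_neg, exp_log (hne c hc), mul_inv_cancel₀ (hne c hc)] at hconst
  exact eq_of_mul_inv_eq_one hconst

lemma IsStarlikeFn.exists_eq_mul_sq {g : ℂ → ℂ} (hg : IsStarlikeFn g) :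
    ∃ q : ℂ → ℂ, DifferentiableOn ℂ q (ball 0 1) ∧ q 0 = 1 ∧
      (∀ z ∈ ball (0 : ℂ) 1, q z ≠ 0) ∧ ∀ z ∈ ball (0 : ℂ) 1, g z = z * q z ^ 2 := by
  obtain ⟨hgd, hg0, hg1, hgre⟩ := hg
  have hslope (z : ℂ) : g z = z * dslope g 0 z := by
    simpa [hg0] using (sub_smul_dslope g 0 z).symm
  have hslope_ne (z : ℂ) (hz : z ∈ ball (0 : ℂ) 1) : dslope g 0 z ≠ 0 := by
    intro h
    rcases eq_or_ne z 0 with rfl | hz0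
    · simp [hg1] at h
    · have := hgre z ⟨hz, hz0⟩
      simp [hslope z, h] at this
  obtain ⟨H, hHd, hH0, hH⟩ := exists_differentiableOn_eqOn_exp
    ((differentiableOn_dslope (ball_mem_nhds 0 one_pos)).mpr hgd) hslope_ne
  refine ⟨fun z => exp (H z / 2), (hHd.div_const 2).cexp, by simp [hH0, hg1],
    fun _ _ => exp_ne_zero _, fun z hz => ?_⟩
  rw [hslope, hH hz, ← exp_nat_mul, Nat.cast_ofNat, mul_div_cancel₀ _ two_ne_zero]

lemma IsStarlikeFn.exists_eq_mul_sq_half_lt_re {g : ℂ → ℂ} (hg : IsStarlikeFn g) :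
    ∃ q : ℂ → ℂ, DifferentiableOn ℂ q (ball 0 1) ∧ q 0 = 1 ∧
      (∀ z ∈ ball (0 : ℂ) 1, 1 / 2 < (q z).re) ∧ ∀ z ∈ ball (0 : ℂ) 1, g z = z * q z ^ 2 := by
  obtain ⟨q, hq, hq0, hne, hgq⟩ := hg.exists_eq_mul_sq
  refine ⟨q, hq, hq0, fun z hz => half_lt_re_of_neg_half_lt_re hq hq0 hne (fun z hz => ?_) hz, hgq⟩
  rcases eq_or_ne z 0 with rfl | hz0
  · simp
  have hderiv : deriv g z = q z ^ 2 + z * (2 * q z * deriv q z) := by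
    have hq' := (hq.differentiableAt (isOpen_ball.mem_nhds hz)).hasDerivAt
    have hgz : g =ᶠ[𝓝 z] fun z => z * q z ^ 2 :=
      Filter.eventuallyEq_of_mem (isOpen_ball.mem_nhds hz) hgq
    rw [hgz.deriv_eq]
    simpa using ((hasDerivAt_id z).fun_mul (hq'.fun_pow 2)).deriv
  have hquot : z * deriv g z / g z = 1 + (2 : ℝ) * (z * deriv q z / q z) := by
    have := hne z hz
    rw [hderiv, hgq z hz]
    push_cast
    field_simp
  have hpos := hg.2.2.2 z ⟨hz, hz0⟩
  rw [hquot, add_re, one_re, re_ofReal_mul] at hpos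
  linarith

/-! ### Derivatives of close-to-convex functions -/

lemma re_pos_of_forall_ne_center {p : ℂ → ℂ} {c : ℂ} {r : ℝ} (hr : 0 < r)
    (hp : DifferentiableOn ℂ p (ball c r)) (hre : ∀ z ∈ ball c r \ {c}, 0 < (p z).re) :
    0 < (p c).re := by
  have hr₂ : 0 < r / 2 := half_pos hr
  have hsub : closedBall c (r / 2) ⊆ ball c r := closedBall_subset_ball (half_lt_self hr)
  have hcont := hp.continuousOn.mono (sphere_subset_closedBall.trans hsub)
  have hcont_re : ContinuousOn (fun z => (p z).re) (sphere c (r / 2)) :=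
    continuous_re.comp_continuousOn hcont
  have hmean : Real.circleAverage (fun z => (p z).re) c (r / 2) = (p c).re := by
    have hcl : DiffContOnCl ℂ p (ball c |r / 2|) := by
      rw [abs_of_pos hr₂]
      exact (hp.mono (closure_ball_subset_closedBall.trans hsub)).diffContOnCl
    exact (reCLM.circleAverage_comp_comm (hcont.circleIntegrable hr₂.le)).trans
      (congrArg re hcl.circleAverage)
  obtain ⟨z₀, hz₀, hmin⟩ := (isCompact_sphere c (r / 2)).exists_isMinOn
    (NormedSpace.sphere_nonempty.mpr hr₂.le) hcont_re
  calc 0 < (p z₀).re :=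
        hre z₀ ⟨hsub (sphere_subset_closedBall hz₀), ne_of_mem_sphere hz₀ hr₂.ne'⟩
    _ = Real.circleAverage (fun _ => (p z₀).re) c (r / 2) := (Real.circleAverage_const _ _ _).symm
    _ ≤ Real.circleAverage (fun z => (p z).re) c (r / 2) :=
        Real.circleAverage_mono (circleIntegrable_const _ _ _) (hcont_re.circleIntegrable hr₂.le)
          fun z hz => hmin (by rwa [abs_of_pos hr₂] at hz)
    _ = (p c).re := hmean

lemma IsCloseToConvex.exists_deriv_eq_sq_mul {f : ℂ → ℂ} (hf : IsCloseToConvex f) :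
    ∃ (q p : ℂ → ℂ) (E : ℂ), DifferentiableOn ℂ q (ball 0 1) ∧ q 0 = 1 ∧
      (∀ z ∈ ball (0 : ℂ) 1, 1 / 2 < (q z).re) ∧
      DifferentiableOn ℂ p (ball 0 1) ∧ p 0 = 1 ∧ ‖E‖ = 1 ∧
      (∀ z ∈ ball (0 : ℂ) 1, 0 < (E * p z).re) ∧
      ∀ z ∈ ball (0 : ℂ) 1, deriv f z = q z ^ 2 * p z := by
  obtain ⟨hfd, -, hf1, θ, g, hg, hre⟩ := hf
  obtain ⟨q, hq, hq0, hqre, hgq⟩ := hg.exists_eq_mul_sq_half_lt_re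
  have hne (z : ℂ) (hz : z ∈ ball (0 : ℂ) 1) : q z ≠ 0 := fun h => by
    have := hqre z hz
    norm_num [h] at this
  have hp : DifferentiableOn ℂ (fun z => deriv f z / q z ^ 2) (ball 0 1) :=
    (hfd.deriv isOpen_ball).div (hq.pow 2) fun z hz => pow_ne_zero 2 (hne z hz)
  have hpre : ∀ z ∈ ball (0 : ℂ) 1 \ {0}, 0 < (exp (θ * I) * (deriv f z / q z ^ 2)).re := by
    intro z hz
    have hz0 : z ≠ 0 := hz.2
    convert hre z hz using 2
    rw [hgq z hz.1]
    field_simp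
  refine ⟨q, fun z => deriv f z / q z ^ 2, exp (θ * I), hq, hq0, hqre, hp, by simp [hf1, hq0],
    norm_exp_ofReal_mul_I θ, fun z hz => ?_, fun z hz => ?_⟩
  · rcases eq_or_ne z 0 with rfl | hz0
    · exact re_pos_of_forall_ne_center (p := fun z => exp (θ * I) * (deriv f z / q z ^ 2))
        one_pos (hp.const_mul _) hpre
    · exact hpre z ⟨hz, hz0⟩
  · rw [mul_div_cancel₀ _ (pow_ne_zero 2 (hne z hz))]

/-- The affine map `h ↦ -e + (1 + e) * h` with `e = conj E ^ 2` carries the half-plane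
`1 / 2 < re h` onto the half-plane `0 < re (E * w)` and fixes `1`. -/
lemma eq_neg_conj_sq_add_one_add_conj_sq_mul {E : ℂ} (hE : ‖E‖ = 1) (hre : E.re ≠ 0) (w : ℂ) :
    w = -starRingEnd ℂ E ^ 2 + (1 + starRingEnd ℂ E ^ 2) *
      (1 / 2 + ((2 * E.re)⁻¹ : ℝ) * (E * w - E.im * I)) := by
  have hEc : (E.re : ℂ) ≠ 0 := ofReal_ne_zero.mpr hre
  have hconj : E * starRingEnd ℂ E = 1 := by rw [mul_conj', hE]; norm_num
  have hadd := add_conj E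
  have hsub := sub_conj E
  push_cast at hadd hsub ⊢
  have hfactor : 1 + starRingEnd ℂ E ^ 2 = 2 * E.re * starRingEnd ℂ E := by
    linear_combination starRingEnd ℂ E * hadd - hconj
  rw [hfactor]
  field_simp
  linear_combination 1 / 2 * starRingEnd ℂ E * (hadd - hsub) - w * hconj

lemma taylorSeries_mem_coeffHull_of_re_mul_pos {p : ℂ → ℂ} {E : ℂ}
    (hp : DifferentiableOn ℂ p (ball 0 1)) (hp0 : p 0 = 1) (hE : ‖E‖ = 1)
    (hre : ∀ z ∈ ball (0 : ℂ) 1, 0 < (E * p z).re) :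
    taylorSeries p ∈ coeffHull {φ | ∃ b x : ℂ, ‖b‖ = 1 ∧ ‖x‖ = 1 ∧
      φ = (1 - C x * X) * geomSeries b} := by
  have hE0 : 0 < E.re := by simpa [hp0] using hre 0 (by simp)
  set e := starRingEnd ℂ E ^ 2 with he
  set h : ℂ → ℂ := fun z => 1 / 2 + ((2 * E.re)⁻¹ : ℝ) * (E * p z - E.im * I) with hh
  have hph : p = fun z => -e + (1 + e) * h z :=
    funext fun z => eq_neg_conj_sq_add_one_add_conj_sq_mul hE hE0.ne' (p z)
  have hh_mem : taylorSeries h ∈ coeffHull (geomSeries '' sphere 0 1) := by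
    refine taylorSeries_mem_coeffHull_of_half_lt_re (by fun_prop) ?_ fun z hz => ?_
    · have hEre : E - E.im * I = E.re := sub_eq_of_eq_add (re_add_im E).symm
      have : (E.re : ℂ) ≠ 0 := ofReal_ne_zero.mpr hE0.ne'
      simp only [hh, hp0, mul_one, hEre]
      push_cast
      field_simp
      norm_num
    · have : 0 < (2 * E.re)⁻¹ * (E * p z).re := mul_pos (by positivity) (hre z hz)
      have half_re : (1 / 2 : ℂ).re = 1 / 2 := by norm_num
      rw [hh, add_re, half_re, re_ofReal_mul, sub_re, re_ofReal_mul, I_re, mul_zero, sub_zero]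
      linarith
  have he_norm : ‖e‖ = 1 := by simp [he, hE]
  rw [hph, taylorSeries_const_add_const_mul]
  refine coeffHull_mono ?_ (add_mem_coeffHull_vadd _ (mul_mem_coeffHull_smul _ hh_mem))
  rintro _ ⟨_, ⟨_, ⟨b, hb, rfl⟩, rfl⟩, rfl⟩
  refine ⟨b, -(e * b), mem_sphere_zero_iff_norm.mp hb, by simpa [he_norm] using hb, ?_⟩
  simp only [vadd_eq_add, smul_eq_mul, map_neg, map_add, map_mul, map_one]
  linear_combination C e * geomSeries_mul_one_sub b

lemma IsCloseToConvex.taylorSeries_deriv_mem_coeffHull {f : ℂ → ℂ} (hf : IsCloseToConvex f) :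
    taylorSeries (deriv f) ∈ coeffHull {φ | ∃ x y : ℂ, ‖x‖ = 1 ∧ ‖y‖ ≤ 1 ∧
      φ = (1 - C x * X) * geomSeries y ^ 3} := by
  obtain ⟨q, p, E, hq, hq0, hqre, hp, hp0, hE, hpre, hderiv⟩ := hf.exists_deriv_eq_sq_mul
  have hball : ball (0 : ℂ) 1 ∈ 𝓝 0 := ball_mem_nhds 0 one_pos
  have hfactor : taylorSeries (deriv f) = taylorSeries p * (taylorSeries q * taylorSeries q) := by
    have hqan := hq.analyticAt hball
    rw [← taylorSeries_mul hqan hqan, ← taylorSeries_mul (hp.analyticAt hball) (hqan.mul hqan)]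
    refine taylorSeries_congr (Filter.eventuallyEq_of_mem hball fun z hz => ?_)
    simp only [hderiv z hz, Pi.mul_apply]
    ring
  have hq_mem := taylorSeries_mem_coeffHull_of_half_lt_re hq hq0 hqre
  have hq_sq_mem : taylorSeries q * taylorSeries q ∈ coeffHull (geomSeriesPowers 2) := by
    refine coeffHull_subset_coeffHull ?_ (mul_mem_coeffHull hq_mem hq_mem)
    rintro _ ⟨_, ⟨c, hc, rfl⟩, _, ⟨d, hd, rfl⟩, rfl⟩
    simpa using geomSeries_pow_mul_geomSeries_mem_coeffHull 0 (sphere_subset_closedBall hc)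
      (sphere_subset_closedBall hd)
  rw [hfactor]
  refine coeffHull_subset_coeffHull ?_
    (mul_mem_coeffHull (taylorSeries_mem_coeffHull_of_re_mul_pos hp hp0 hE hpre) hq_sq_mem)
  rintro _ ⟨_, ⟨b, x, hb, hx, rfl⟩, _, ⟨u, hu, rfl⟩, rfl⟩
  have hcube := mul_mem_coeffHull_smul (1 - C x * X) <|
    geomSeries_pow_mul_geomSeries_mem_coeffHull 1 hu (mem_closedBall_zero_iff.mpr hb.le)
  rw [mul_comm (geomSeries u ^ (1 + 1)), ← mul_assoc] at hcube
  refine coeffHull_mono ?_ hcube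
  rintro _ ⟨_, ⟨y, hy, rfl⟩, rfl⟩
  exact ⟨x, y, hx, mem_closedBall_zero_iff.mp hy, rfl⟩

/-! ### The Zalcman functional -/

lemma coeff_one_sub_mul_geomSeries_pow_three (n : ℕ) (x y : ℂ) :
    coeff n ((1 - C x * X) * geomSeries y ^ 3) =
      (n + 1) / 2 * ((n + 2) * y ^ n - n * (x * y ^ (n - 1))) := by
  cases n with
  | zero =>
    have hconst : constantCoeff (geomSeries y) = 1 := by simpa using coeff_geomSeries 0 y
    simp [hconst]
  | succ n =>
    rw [sub_mul, one_mul, mul_assoc, map_sub, coeff_C_mul, coeff_succ_X_mul,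
      coeff_geomSeries_pow, coeff_geomSeries_pow, Nat.cast_choose_two, Nat.cast_choose_two]
    push_cast
    ring

lemma mul_sq_le_of_mul_le {k lam : ℝ} (hk : 0 ≤ k) (hlam : 0 ≤ lam)
    (hle : lam * (k ^ 2 + k + 1) ≤ 2 * (k + 1)) (q w : ℝ) :
    lam * (2 * q + k * w) ^ 2 ≤ 2 * (4 * (k + 1) * q ^ 2 + k * w ^ 2) := by
  have cauchy_schwarz : (k + 1) * (2 * q + k * w) ^ 2 ≤
      (k ^ 2 + k + 1) * (4 * (k + 1) * q ^ 2 + k * w ^ 2) := by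
    linarith [mul_nonneg hk (sq_nonneg (2 * (k + 1) * q - w))]
  have hk₁ : 0 < k + 1 := by positivity
  refine le_of_mul_le_mul_left ?_ hk₁
  calc (k + 1) * (lam * (2 * q + k * w) ^ 2)
      = lam * ((k + 1) * (2 * q + k * w) ^ 2) := by ring
    _ ≤ lam * ((k ^ 2 + k + 1) * (4 * (k + 1) * q ^ 2 + k * w ^ 2)) := by gcongr
    _ = lam * (k ^ 2 + k + 1) * (4 * (k + 1) * q ^ 2 + k * w ^ 2) := by ring
    _ ≤ 2 * (k + 1) * (4 * (k + 1) * q ^ 2 + k * w ^ 2) := by gcongr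
    _ = (k + 1) * (2 * (4 * (k + 1) * q ^ 2 + k * w ^ 2)) := by ring

/-- For `u = ω y ^ k` and `v = ω x y ^ (k - 1)` the left-hand side is the linearised Zalcman
functional at the extreme derivative `(1 - x X) (1 - y X)⁻³`. -/
lemma re_sub_add_mul_im_le {k lam : ℝ} (hk : 0 ≤ k) (hlam : 0 ≤ lam)
    (hle : lam * (k ^ 2 + k + 1) ≤ 2 * (k + 1)) (t : ℝ) {u v : ℂ} (hu : ‖u‖ ≤ 1) (hv : ‖v‖ ≤ 1) :
    ((k + 1) * u ^ 2 - k * (v * u)).re + lam * t * ((k + 2) * u - k * v).im ≤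
      2 * k + 1 + lam * t ^ 2 := by
  have hre : ((k + 1) * u ^ 2 - k * (v * u)).re =
      (k + 1) * (u.re ^ 2 - u.im ^ 2) - k * (v.re * u.re - v.im * u.im) := by
    simp [pow_two]
  have him : ((k + 2) * u - k * v).im = 2 * u.im + k * (u.im - v.im) := by
    simp only [sub_im, mul_im, add_re, add_im, ofReal_re, ofReal_im, re_ofNat, im_ofNat]
    ring
  have hdisc {z : ℂ} (hz : ‖z‖ ≤ 1) : z.re ^ 2 + z.im ^ 2 ≤ 1 := by
    rw [← Complex.sq_norm_sub_sq_re, add_sub_cancel]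
    exact pow_le_one₀ (norm_nonneg z) hz
  have hsum : k * (u.re ^ 2 + u.im ^ 2 + (v.re ^ 2 + v.im ^ 2)) ≤ k * (1 + 1) := by
    gcongr
    exacts [hdisc hu, hdisc hv]
  have hu_sq : (k + 1) * (u.re ^ 2 + u.im ^ 2) ≤ k + 1 :=
    mul_le_of_le_one_right (by positivity) (hdisc hu)
  have hsquare := mul_nonneg hlam (sq_nonneg (2 * t - (2 * u.im + k * (u.im - v.im))))
  have hcross := mul_nonneg hk (sq_nonneg (u.re + v.re))
  have hquad := mul_sq_le_of_mul_le hk hlam hle u.im (u.im - v.im)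
  rw [hre, him]
  linarith

lemma IsCloseToConvex.re_sub_mul_taylorCoeff_le {f : ℂ → ℂ} (hf : IsCloseToConvex f) {n : ℕ}
    {lam : ℝ} (hlam : 0 ≤ lam) (hle : lam * (n ^ 2 + n + 1) ≤ 2 * (n + 1)) {ω : ℂ} (hω : ‖ω‖ = 1)
    (t : ℝ) :
    (ω ^ 2 * taylorCoeff f (2 * n + 1) - (2 * lam * t : ℝ) * (I * (ω * taylorCoeff f (n + 1)))).re
      ≤ 2 * n + 1 + lam * t ^ 2 := by
  set Λ : ℂ⟦X⟧ →ₗ[ℂ] ℂ := (ω ^ 2 / (2 * n + 1)) • coeff (2 * n) -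
    ((2 * lam * t : ℝ) * (I * (ω / (n + 1)))) • coeff n with hΛ
  have hn : (n + 1 : ℂ) ≠ 0 := n.cast_add_one_ne_zero
  have hn₂ : (2 * n + 1 : ℂ) ≠ 0 := mod_cast (2 * n).succ_ne_zero
  have hΛ_mem : Λ ∈ coeffFunctionals :=
    sub_mem (Submodule.smul_mem _ _ (coeff_mem_coeffFunctionals _))
      (Submodule.smul_mem _ _ (coeff_mem_coeffFunctionals _))
  have hΛ_deriv : Λ (taylorSeries (deriv f)) = ω ^ 2 * taylorCoeff f (2 * n + 1) -
      (2 * lam * t : ℝ) * (I * (ω * taylorCoeff f (n + 1))) := by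
    simp only [hΛ, LinearMap.sub_apply, LinearMap.smul_apply, coeff_taylorSeries, smul_eq_mul,
      taylorCoeff_succ]
    push_cast
    ring
  rw [← hΛ_deriv]
  refine hf.taylorSeries_deriv_mem_coeffHull Λ hΛ_mem _ ?_
  rintro _ ⟨x, y, hx, hy, rfl⟩
  have hypow (m : ℕ) : ‖y‖ ^ m ≤ 1 := pow_le_one₀ (norm_nonneg y) hy
  have hu : ‖ω * y ^ n‖ ≤ 1 := by simpa [hω] using hypow n
  have hv : ‖ω * x * y ^ (n - 1)‖ ≤ 1 := by simpa [hω, hx] using hypow (n - 1)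
  have hpow : (n : ℂ) * y ^ (2 * n - 1) = n * (y ^ (n - 1) * y ^ n) := by
    cases n with
    | zero => simp
    | succ n => rw [← pow_add]; congr 2; lia
  have hΛ_extreme : Λ ((1 - C x * X) * geomSeries y ^ 3) =
      ((n + 1) * (ω * y ^ n) ^ 2 - n * (ω * x * y ^ (n - 1) * (ω * y ^ n))) -
        (lam * t : ℝ) * (I * ((n + 2) * (ω * y ^ n) - n * (ω * x * y ^ (n - 1)))) := by
    simp only [hΛ, LinearMap.sub_apply, LinearMap.smul_apply, smul_eq_mul,
      coeff_one_sub_mul_geomSeries_pow_three]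
    push_cast
    field_simp
    linear_combination (-ω ^ 2 * x) * hpow
  rw [hΛ_extreme, sub_re, re_ofReal_mul, I_mul_re, mul_neg, sub_neg_eq_add]
  exact_mod_cast re_sub_add_mul_im_le n.cast_nonneg hlam hle t hu hv

lemma exists_norm_eq_one_sq_mul_eq_norm (z : ℂ) : ∃ ω : ℂ, ‖ω‖ = 1 ∧ ω ^ 2 * z = ‖z‖ := by
  refine ⟨exp ((-(arg z / 2) : ℝ) * I), norm_exp_ofReal_mul_I _, ?_⟩
  calc exp ((-(arg z / 2) : ℝ) * I) ^ 2 * z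
      = exp (-(arg z * I)) * (‖z‖ * exp (arg z * I)) := by
        rw [norm_mul_exp_arg_mul_I, ← exp_nat_mul]
        congr 2
        push_cast
        ring
    _ = ‖z‖ := by rw [mul_left_comm, ← exp_add, neg_add_cancel, exp_zero, mul_one]

theorem generalized_zalcman_closeToConvex_n4_small_lambda_general (n : ℕ) (lam : ℝ)
    (hlam : 0 ≤ lam) (hle : lam ≤ 2 * (n + 1) / (n ^ 2 + n + 1))
    (f : ℂ → ℂ) (hf : IsCloseToConvex f) :
    ‖(lam : ℂ) * taylorCoeff f (n + 1) ^ 2 - taylorCoeff f (2 * n + 1)‖ ≤ 2 * n + 1 := by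
  set a := taylorCoeff f (n + 1)
  set b := taylorCoeff f (2 * n + 1)
  obtain ⟨ω, hω, hrot⟩ := exists_norm_eq_one_sq_mul_eq_norm (b - lam * a ^ 2)
  rw [le_div_iff₀ (by positivity)] at hle
  have hsupport := hf.re_sub_mul_taylorCoeff_le hlam hle hω (ω * a).im
  rw [sub_re, re_ofReal_mul, I_mul_re] at hsupport
  rw [norm_sub_rev]
  calc ‖b - lam * a ^ 2‖ = (ω ^ 2 * b - lam * (ω * a) ^ 2).re := by
        rw [← ofReal_re ‖b - lam * a ^ 2‖, ← hrot]
        ring_nf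
    _ = (ω ^ 2 * b).re - lam * ((ω * a).re ^ 2 - (ω * a).im ^ 2) := by
        rw [sub_re, re_ofReal_mul, pow_two (ω * a), mul_re (ω * a)]
        ring
    _ ≤ 2 * n + 1 := by linarith [mul_nonneg hlam (sq_nonneg (ω * a).re)]

theorem generalized_zalcman_closeToConvex_n4_small_lambda
    (lam : ℝ) (hlam1 : 0 < lam) (hlam2 : lam ≤ 8 / 13)
    (f : ℂ → ℂ) (hf : IsCloseToConvex f) :
    ‖(lam : ℂ) * (taylorCoeff f 4) ^ 2 - taylorCoeff f 7‖ ≤ 7 := by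
  have h := generalized_zalcman_closeToConvex_n4_small_lambda_general 3 lam hlam1.le
    (by norm_num; linarith) f hf
  norm_num at h
  exact h
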